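/- Let p ≥ 3 be prime, S ⊆ F_p^2 nonempty, and w : F_p^2 → ℝ with supp(w) = S. Then the number of perfect directions with respect to w is at most |S|/2, unless S is a line and w is constant on S. -/

import Mathlib

open scoped Classical

/-- A direction (one-dimensional subspace `H` of `F_p^2`) is *perfect* with respect to
`w : F_p^2 → ℝ` if every line in this direction (coset of `H`) has `w`-sum equal to
`(1/p)` times the total `w`-sum. -/
def IsPerfect (p : ℕ) [NeZero p] (w : ZMod p × ZMod p → ℝ)
    (H : Submodule (ZMod p) (ZMod p × ZMod p)) : Prop :=
  ∀ a : ZMod p × ZMod p,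
    ∑ h : H, w (a + (h : ZMod p × ZMod p)) = (∑ z : ZMod p × ZMod p, w z) / p

/-- `S` is an (affine) line in `F_p^2`: a coset of a one-dimensional subspace. -/
def IsLine (p : ℕ) (S : Set (ZMod p × ZMod p)) : Prop :=
  ∃ (a : ZMod p × ZMod p) (H : Submodule (ZMod p) (ZMod p × ZMod p)),
    Module.finrank (ZMod p) H = 1 ∧ S = (a + ·) '' (H : Set (ZMod p × ZMod p))

/-- `S` determines the direction of `H` if some line in that direction contains
at least two points of `S`; equivalently, two distinct points of `S` differ by an
element of `H`. -/
def Determines (p : ℕ) (S : Set (ZMod p × ZMod p))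
    (H : Submodule (ZMod p) (ZMod p × ZMod p)) : Prop :=
  ∃ x ∈ S, ∃ y ∈ S, x ≠ y ∧ x - y ∈ H

/-!
Let `c` be the common sum of the weights along the lines in perfect directions; replacing `w` by
`-w`, we may assume `0 ≤ c`. Suppose that more than half as many directions as support points are
perfect. Then `0 ≤ w ≤ c`: in every perfect direction a point of weight greater than `c` shares its
line with a negative point, and a negative point shares its line with a positive one, and with two
of them once `w ≤ c` is known; collecting these over all directions gives too many support points.

Let `T` be the set of points of weight `c`. A line in a perfect direction through a point of `T`
contains no other support point, and one that misses `T` contains at least two support points, so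
averaging gives `#S + #T ≥ 2 * q`. Hence `T` is a large set determining none of the perfect
directions, and Rédei's lacunary polynomial method, in Szőnyi's form, forces `T` to be collinear.
If there were a support point of weight other than `c`, there would be one off the line of `T`, and
the lines through it in the perfect directions would meet the line of `T` in too many points outside
`T`. So `S = T`, and `#S ≥ q` makes it a full line.
-/

section Lacunary

open Polynomial Finset

/-- The bivariate polynomial `f`, with outer variable `X` and inner variable `Y`, has total degree
at most `n`. The remainders computed below are polynomials in `X` over `A[Y]`, which is why total
degree is defined for `A[X][X]` rather than for `MvPolynomial`. -/
def TotalDegreeLE {A : Type*} [Semiring A] (f : A[X][X]) (n : ℕ) : Prop :=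
  ∀ i j, (f.coeff i).coeff j ≠ 0 → i + j ≤ n

namespace TotalDegreeLE

section Semiring

variable {A : Type*} [Semiring A] {f g : A[X][X]} {m n : ℕ}

theorem natDegree_coeff_le (hf : TotalDegreeLE f n) (i : ℕ) : (f.coeff i).natDegree ≤ n - i := by
  rw [natDegree_le_iff_coeff_eq_zero]
  intro j hj
  by_contra h
  have := hf i j h
  omega

theorem C_mul_X_pow {a : A[X]} {m : ℕ} (ha : a.natDegree ≤ m) (k : ℕ) :
    TotalDegreeLE (C a * X ^ k) (k + m) := by
  intro i j h
  rw [coeff_C_mul_X_pow] at h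
  split_ifs at h with hik
  · have := (le_natDegree_of_ne_zero h).trans ha
    omega
  · simp at h

theorem mul (hf : TotalDegreeLE f m) (hg : TotalDegreeLE g n) : TotalDegreeLE (f * g) (m + n) := by
  intro i j h
  rw [coeff_mul, finsetSum_coeff] at h
  obtain ⟨⟨i₁, i₂⟩, hi, h⟩ := exists_ne_zero_of_sum_ne_zero h
  rw [coeff_mul] at h
  obtain ⟨⟨j₁, j₂⟩, hj, h⟩ := exists_ne_zero_of_sum_ne_zero h
  have hf' := hf _ _ (left_ne_zero_of_mul h)
  have hg' := hg _ _ (right_ne_zero_of_mul h)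
  rw [HasAntidiagonal.mem_antidiagonal] at hi hj
  dsimp only at hi hj hf' hg'
  omega

end Semiring

theorem prod {A ι : Type*} [CommSemiring A] {s : Finset ι} {f : ι → A[X][X]} {d : ι → ℕ}
    (hf : ∀ i ∈ s, TotalDegreeLE (f i) (d i)) :
    TotalDegreeLE (∏ i ∈ s, f i) (∑ i ∈ s, d i) := by
  induction s using Finset.cons_induction with
  | empty => simpa using C_mul_X_pow (natDegree_one (R := A)).le 0
  | cons i s hi ih =>
    rw [prod_cons, sum_cons]
    exact (hf i (mem_cons_self i s)).mul (ih fun j hj => hf j (mem_cons_of_mem hj))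

section Ring

variable {A : Type*} [Ring A] {f g : A[X][X]} {n : ℕ}

theorem sub (hf : TotalDegreeLE f n) (hg : TotalDegreeLE g n) : TotalDegreeLE (f - g) n := by
  intro i j h
  by_cases hfij : (f.coeff i).coeff j = 0
  · exact hg i j fun hgij => h (by rw [coeff_sub, coeff_sub, hfij, hgij, sub_zero])
  · exact hf i j hfij

theorem X_sub_C {a : A[X]} (ha : a.natDegree ≤ 1) : TotalDegreeLE (X - C a) 1 := by
  have hX : TotalDegreeLE (X : A[X][X]) 1 := by
    simpa using C_mul_X_pow (natDegree_one (R := A)).le 1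
  have hC : TotalDegreeLE (C a) 1 := by simpa using C_mul_X_pow ha 0
  exact hX.sub hC

end Ring

theorem modByMonic {A : Type*} [CommRing A] {f R : A[X][X]} {n : ℕ} (hf : TotalDegreeLE f n)
    (hR : R.Monic) (hRdeg : TotalDegreeLE R R.natDegree) : TotalDegreeLE (f %ₘ R) n := by
  rcases subsingleton_or_nontrivial A with _ | _
  · exact fun i j h => (h (Subsingleton.elim _ _)).elim
  induction f using WellFounded.induction degree_lt_wf with
  | _ f ih =>
    by_cases hlt : f.degree < R.degree
    · rwa [(modByMonic_eq_self_iff hR).2 hlt]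
    have hRf : R.degree ≤ f.degree := not_lt.1 hlt
    have hf0 : f ≠ 0 := by
      rintro rfl
      exact hlt (by simpa [bot_lt_iff_ne_bot] using hR.ne_zero)
    set k := f.natDegree - R.natDegree
    set M := R * (C f.leadingCoeff * X ^ k) with hM
    have hMdeg : TotalDegreeLE M n := by
      have hdeg : R.natDegree + (k + (n - f.natDegree)) = n := by
        have hRf' := natDegree_le_natDegree hRf
        have hfn := hf f.natDegree _ (leadingCoeff_ne_zero.2 (leadingCoeff_ne_zero.2 hf0))
        omega
      exact hdeg ▸ hRdeg.mul (C_mul_X_pow (hf.natDegree_coeff_le _) k)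
    have hmod : (f - M) %ₘ R = f %ₘ R := by
      rw [sub_modByMonic, hM, self_mul_modByMonic hR, sub_zero]
    exact hmod ▸ ih _ (div_wf_lemma ⟨hRf, hf0⟩ hR) (hf.sub hMdeg)

end TotalDegreeLE

variable {K ι : Type*} [Field K] [Fintype K] {T : Finset ι}

theorem prod_X_sub_C_dvd_X_pow_card_sub_X {a : ι → K} (ha : Set.InjOn a T) :
    ∏ z ∈ T, (X - C (a z)) ∣ X ^ Fintype.card K - X := by
  refine Finset.prod_dvd_of_coprime (fun y hy z hz hyz => ?_) fun z _ => ?_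
  · exact isCoprime_X_sub_C_of_isUnit_sub (sub_ne_zero.2 fun h => hyz (ha hy hz h)).isUnit
  · simp [dvd_iff_isRoot, FiniteField.pow_card]

theorem X_pow_card_modByMonic_prod_X_sub_C {a : ι → K} (ha : Set.InjOn a T) (hT : 2 ≤ #T) :
    X ^ Fintype.card K %ₘ ∏ z ∈ T, (X - C (a z)) = X := by
  have hmonic := monic_prod_X_sub_C a T
  rw [modByMonic_eq_of_dvd_sub hmonic (prod_X_sub_C_dvd_X_pow_card_sub_X ha),
    modByMonic_eq_self_iff hmonic]
  refine degree_lt_degree ?_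
  rw [natDegree_X, natDegree_finsetProd_X_sub_C_eq_card]
  omega

-- The remainder `r` of `X ^ q` modulo `∏ (X - (A z - B z Y))` in `K[Y][X]` specializes to `X` at
-- each `Y = m ∈ P`, so for `i > 1` its coefficient of `X ^ i`, of degree at most `q - i` in `Y`,
-- has `#P` roots.
theorem natDegree_X_pow_card_modByMonic_le {A B : ι → K} {P : Finset K} (hT : 2 ≤ #T)
    (hP : ∀ m ∈ P, Set.InjOn (fun z => A z - B z * m) T) :
    (X ^ Fintype.card K %ₘ ∏ z ∈ T, (X - C (A z))).natDegree ≤ max 1 (Fintype.card K - #P) := by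
  set q := Fintype.card K
  set R : K[X][X] := ∏ z ∈ T, (X - C (C (A z) - C (B z) * X)) with hR
  have hmonic : R.Monic := monic_prod_X_sub_C _ T
  have hRdeg : TotalDegreeLE R R.natDegree := by
    rw [natDegree_finsetProd_X_sub_C_eq_card, card_eq_sum_ones]
    exact .prod fun z _ => .X_sub_C (by compute_degree)
  set r : K[X][X] := X ^ q %ₘ R
  have hr : TotalDegreeLE r q := by
    refine TotalDegreeLE.modByMonic ?_ hmonic hRdeg
    simpa using TotalDegreeLE.C_mul_X_pow (natDegree_one (R := K)).le q
  have hmap (m : K) :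
      r.map (evalRingHom m) = X ^ q %ₘ ∏ z ∈ T, (X - C (A z - B z * m)) := by
    rw [map_modByMonic _ hmonic, hR, Polynomial.map_prod]
    simp
  have hcoeff {i : ℕ} (hi1 : 1 < i) (hiP : q - #P < i) : r.coeff i = 0 := by
    by_cases h0 : r.coeff i = 0
    · exact h0
    have hle : i ≤ q := by
      have := hr i _ (leadingCoeff_ne_zero.2 h0)
      omega
    have hdeg := hr.natDegree_coeff_le i
    refine eq_zero_of_natDegree_lt_card_of_eval_eq_zero' _ P (fun m hm => ?_) (by omega)
    rw [← coe_evalRingHom, ← coeff_map, hmap,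
      X_pow_card_modByMonic_prod_X_sub_C (hP m hm) hT, coeff_X_of_ne_one hi1.ne']
  have hmap0 : r.map (evalRingHom 0) = X ^ q %ₘ ∏ z ∈ T, (X - C (A z)) := by simpa using hmap 0
  rw [← hmap0, natDegree_le_iff_coeff_eq_zero]
  intro i hi
  rw [coeff_map, hcoeff (lt_of_le_of_lt (le_max_left _ _) hi)
    (lt_of_le_of_lt (le_max_right _ _) hi), map_zero]

theorem eval_eq_of_prod_X_sub_C_dvd {a : ι → K} {ρ : K[X]}
    (h : ∏ z ∈ T, (X - C (a z)) ∣ X ^ Fintype.card K - ρ) {z : ι} (hz : z ∈ T) :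
    ρ.eval (a z) = a z := by
  have hdvd : X - C (a z) ∣ X ^ Fintype.card K - ρ :=
    (dvd_prod_of_mem (fun z => X - C (a z)) hz).trans h
  have hroot : a z ^ Fintype.card K - ρ.eval (a z) = 0 := by
    simpa using (dvd_iff_isRoot.1 hdvd).eq_zero
  rw [← sub_eq_zero.1 hroot, FiniteField.pow_card]

-- A root of multiplicity `k` of the product is a root of `X - ρ`, since `a ^ q = a`, and a root of
-- multiplicity at least `k - 1` of the derivative `-ρ'` of `X ^ q - ρ`.
theorem prod_X_sub_C_dvd_mul_derivative {a : ι → K} {ρ : K[X]}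
    (h : ∏ z ∈ T, (X - C (a z)) ∣ X ^ Fintype.card K - ρ) :
    ∏ z ∈ T, (X - C (a z)) ∣ (X - ρ) * derivative ρ := by
  have heval {z : ι} (hz : z ∈ T) : ρ.eval (a z) = a z := eval_eq_of_prod_X_sub_C_dvd h hz
  rw [prod_comp (fun b => X - C b) a] at h ⊢
  refine Finset.prod_dvd_of_coprime (fun b _ c _ hbc => ?_) fun b hb => ?_
  · exact (isCoprime_X_sub_C_of_isUnit_sub (sub_ne_zero.2 hbc).isUnit).pow
  set k := #{z ∈ T | a z = b}
  have hpow : (X - C b) ^ k ∣ X ^ Fintype.card K - ρ :=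
    (dvd_prod_of_mem (fun b => (X - C b) ^ #{z ∈ T | a z = b}) hb).trans h
  obtain ⟨z, hz, rfl⟩ := mem_image.1 hb
  have hk : k ≠ 0 := card_ne_zero_of_mem (mem_filter.2 ⟨hz, rfl⟩)
  have hroot : X - C (a z) ∣ X - ρ := by
    simp [dvd_iff_isRoot, heval hz]
  have hderiv : (X - C (a z)) ^ (k - 1) ∣ derivative ρ := by
    have hneg : derivative (X ^ Fintype.card K - ρ) = -derivative ρ := by
      rw [derivative_sub, derivative_X_pow, FiniteField.cast_card_eq_zero, C_0, zero_mul, zero_sub]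
    rw [← dvd_neg, ← hneg]
    exact pow_sub_one_dvd_derivative_of_pow_dvd hpow
  rw [← mul_pow_sub_one hk]
  exact mul_dvd_mul hroot hderiv

theorem natDegree_eq_zero_of_derivative_eq_zero_of_lt {A : Type*} [CommSemiring A]
    [NoZeroDivisors A] (p : ℕ) [CharP A p] {f : A[X]} (hf : derivative f = 0)
    (hfp : f.natDegree < p) : f.natDegree = 0 := by
  have hp : p ≠ 0 := by omega
  have hdeg := natDegree_expand p (contract p f)
  rw [expand_contract p hf hp] at hdeg
  exact Nat.eq_zero_of_dvd_of_lt (Dvd.intro_left _ hdeg.symm) hfp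

theorem injOn_or_forall_eq_of_prod_X_sub_C_dvd (p : ℕ) [CharP K p] {a : ι → K} {ρ : K[X]} {e : ℕ}
    (h : ∏ z ∈ T, (X - C (a z)) ∣ X ^ Fintype.card K - ρ) (hρ : ρ.natDegree ≤ e) (he : 1 ≤ e)
    (hep : e < p) (hT : 2 * e ≤ #T) :
    Set.InjOn a T ∨ ∀ y ∈ T, ∀ z ∈ T, a y = a z := by
  have hzero : (X - ρ) * derivative ρ = 0 := by
    refine eq_zero_of_dvd_of_natDegree_lt (prod_X_sub_C_dvd_mul_derivative h) ?_
    have hsub : (X - ρ).natDegree ≤ e :=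
      (natDegree_sub_le _ _).trans (max_le (natDegree_X_le.trans he) hρ)
    have hder : (derivative ρ).natDegree ≤ e - 1 := (natDegree_derivative_le ρ).trans (by omega)
    rw [natDegree_finsetProd_X_sub_C_eq_card]
    exact (natDegree_mul_le_of_le hsub hder).trans_lt (by omega)
  rcases mul_eq_zero.1 hzero with hX | hder
  · left
    have hsep : (∏ z ∈ T, (X - C (a z))).Separable := by
      have hdvd : p ∣ Fintype.card K :=
        (CharP.cast_eq_zero_iff K p _).1 (FiniteField.cast_card_eq_zero K)
      rw [← sub_eq_zero.1 hX] at h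
      exact (galois_poly_separable p _ hdvd).of_dvd h
    exact fun y hy z hz => separable_prod_X_sub_C_iff'.1 hsep y hy z hz
  · right
    have hconst := eq_C_of_natDegree_eq_zero
      (natDegree_eq_zero_of_derivative_eq_zero_of_lt p hder (hρ.trans_lt hep))
    have ha {z : ι} (hz : z ∈ T) : a z = ρ.coeff 0 := by
      rw [← eval_eq_of_prod_X_sub_C_dvd h hz, hconst, eval_C, coeff_C_zero]
    exact fun y hy z hz => (ha hy).trans (ha hz).symm

theorem injOn_or_forall_eq_of_injOn_sub_mul (p : ℕ) [CharP K p] {A B : ι → K} {P : Finset K}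
    (hT : 2 ≤ #T) (hP : ∀ m ∈ P, Set.InjOn (fun z => A z - B z * m) T)
    (hPp : Fintype.card K < #P + p) (hcard : 2 * Fintype.card K ≤ #T + 2 * #P) :
    Set.InjOn A T ∨ ∀ y ∈ T, ∀ z ∈ T, A y = A z := by
  have hp : 2 ≤ p := (CharP.char_is_prime K p).two_le
  set f := ∏ z ∈ T, (X - C (A z))
  have hdvd : f ∣ X ^ Fintype.card K - X ^ Fintype.card K %ₘ f :=
    Dvd.intro _ (eq_sub_of_add_eq' (modByMonic_add_div _ f))
  exact injOn_or_forall_eq_of_prod_X_sub_C_dvd p hdvd (natDegree_X_pow_card_modByMonic_le hT hP)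
    (by omega) (by omega) (by omega)

end Lacunary

section Lines

open Finset Module

variable {K V : Type*} [Field K] [AddCommGroup V] [Module K V] {G H : Submodule K V}

theorem eq_of_mem_of_finrank_eq_one (hG : finrank K G = 1) (hH : finrank K H = 1) {v : V}
    (hv : v ≠ 0) (hvG : v ∈ G) (hvH : v ∈ H) : G = H :=
  (eq_span_singleton_of_mem_of_finrank_eq_one hG hvG hv).trans
    (eq_span_singleton_of_mem_of_finrank_eq_one hH hvH hv).symm

theorem exists_dual_ker_eq [FiniteDimensional K V] (hH : finrank K H + 1 = finrank K V) :
    ∃ f : Dual K V, LinearMap.ker f = H := by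
  have hlt : H < ⊤ := by
    refine lt_top_iff_ne_top.2 fun h => ?_
    rw [h, finrank_top] at hH
    omega
  obtain ⟨f, hf, hle⟩ := H.exists_le_ker_of_lt_top hlt
  have hker := Dual.finrank_ker_add_one_of_ne_zero hf
  exact ⟨f, (Submodule.eq_of_le_of_finrank_le hle (by omega)).symm⟩

section Fintype

variable [Fintype V]

/-- The points of the line through `a` in direction `H`, that is, of the coset `a + H`. -/
noncomputable def lineThrough (H : Submodule K V) (a : V) : Finset V :=
  {z | z - a ∈ H}

theorem mem_lineThrough {a z : V} : z ∈ lineThrough H a ↔ z - a ∈ H := by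
  simp [lineThrough]

theorem self_mem_lineThrough (H : Submodule K V) (a : V) : a ∈ lineThrough H a := by
  simp [mem_lineThrough]

theorem mem_lineThrough_comm {a z : V} : z ∈ lineThrough H a ↔ a ∈ lineThrough H z := by
  rw [mem_lineThrough, mem_lineThrough, ← neg_sub, H.neg_mem_iff]

theorem lineThrough_eq_of_mem {a z : V} (hz : z ∈ lineThrough H a) :
    lineThrough H z = lineThrough H a := by
  ext y
  rw [mem_lineThrough] at hz
  rw [mem_lineThrough, mem_lineThrough, ← sub_add_sub_cancel y z a, H.add_mem_iff_left hz]

theorem coe_lineThrough (H : Submodule K V) (a : V) :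
    (lineThrough H a : Set V) = (a + ·) '' (H : Set V) := by
  ext z
  simp [mem_lineThrough, sub_eq_neg_add]

theorem sum_lineThrough {M : Type*} [AddCommMonoid M] (H : Submodule K V) [Fintype H] (a : V)
    (w : V → M) : ∑ z ∈ lineThrough H a, w z = ∑ h : H, w (a + h) := by
  symm
  refine sum_bij (fun h _ => a + h) (fun h _ => ?_) (fun g _ h _ hgh => ?_) (fun z hz => ?_)
    fun _ _ => rfl
  · simp [mem_lineThrough]
  · exact Subtype.ext (add_left_cancel hgh)
  · exact ⟨⟨z - a, mem_lineThrough.1 hz⟩, mem_univ _, add_sub_cancel a z⟩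

theorem pairwiseDisjoint_lineThrough_erase {D : Finset (Submodule K V)}
    (hD : ∀ H ∈ D, finrank K H = 1) (a : V) :
    (D : Set (Submodule K V)).PairwiseDisjoint fun H => (lineThrough H a).erase a := by
  intro G hG H hH hGH
  refine disjoint_left.2 fun z hzG hzH => hGH ?_
  rw [mem_erase, mem_lineThrough] at hzG hzH
  exact eq_of_mem_of_finrank_eq_one (hD G hG) (hD H hH) (sub_ne_zero.2 hzG.1) hzG.2 hzH.2

theorem mul_card_le_card_filter_of_lineThrough {D : Finset (Submodule K V)}
    (hD : ∀ H ∈ D, finrank K H = 1) {P : V → Prop} [DecidablePred P] {a : V} (ha : ¬ P a) {k : ℕ}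
    (h : ∀ H ∈ D, k ≤ #{z ∈ lineThrough H a | P z}) : k * #D ≤ #{z | P z} := by
  have hdisj : (D : Set (Submodule K V)).PairwiseDisjoint
      fun H => {z ∈ lineThrough H a | P z} := by
    refine (pairwiseDisjoint_lineThrough_erase hD a).mono fun H z hz => ?_
    rw [mem_filter] at hz
    exact mem_erase.2 ⟨fun hza => ha (hza ▸ hz.2), hz.1⟩
  calc k * #D ≤ ∑ H ∈ D, #{z ∈ lineThrough H a | P z} := by
        rw [mul_comm, ← smul_eq_mul]
        exact card_nsmul_le_sum D _ k h
    _ = #(D.biUnion fun H => {z ∈ lineThrough H a | P z}) := (card_biUnion hdisj).symm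
    _ ≤ #{z | P z} := card_le_card (biUnion_subset.2 fun H _ =>
        filter_subset_filter P (subset_univ _))

theorem lineThrough_inter_nonempty (hV : finrank K V = 2) (hG : finrank K G = 1)
    (hH : finrank K H = 1) (hGH : G ≠ H) (a b : V) :
    (lineThrough G a ∩ lineThrough H b).Nonempty := by
  have : FiniteDimensional K V := .of_finrank_pos (by omega)
  have hdisj : Disjoint G H := by
    rw [Submodule.disjoint_def]
    intro v hvG hvH
    by_contra hv
    exact hGH (eq_of_mem_of_finrank_eq_one hG hH hv hvG hvH)
  have hsup : G ⊔ H = ⊤ := Submodule.eq_top_of_disjoint G H (by omega) hdisj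
  obtain ⟨g, hg, h, hh, hgh⟩ := Submodule.mem_sup.1 (hsup ▸ Submodule.mem_top : b - a ∈ G ⊔ H)
  refine ⟨a + g, mem_inter.2 ⟨mem_lineThrough.2 (by simpa), mem_lineThrough.2 ?_⟩⟩
  have hneg : a + g - b = -h := by
    rw [eq_neg_iff_add_eq_zero, ← sub_eq_zero.2 hgh]
    abel
  exact hneg ▸ H.neg_mem hh

variable [Fintype K]

theorem card_lineThrough (hH : finrank K H = 1) (a : V) : #(lineThrough H a) = Fintype.card K := by
  rw [card_eq_sum_ones, sum_lineThrough, ← card_eq_sum_ones, card_univ,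
    Module.card_eq_pow_finrank (K := K), hH, pow_one]

theorem sum_sum_lineThrough {M : Type*} [AddCommMonoid M] (hH : finrank K H = 1) (w : V → M) :
    ∑ a, ∑ z ∈ lineThrough H a, w z = Fintype.card K • ∑ z, w z := by
  rw [sum_comm' (t' := univ) (s' := fun z => lineThrough H z)
    (fun a z => by simp [mem_lineThrough_comm (a := a)])]
  simp only [sum_const, card_lineThrough hH, smul_sum]

end Fintype

section Directions

variable [Fintype K] {D : Finset (Submodule K V)}

theorem ncard_setOf_finrank_eq_one (hV : finrank K V = 2) :
    {H : Submodule K V | finrank K H = 1}.ncard = Fintype.card K + 1 := by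
  rw [← Nat.card_coe_set_eq, ← Nat.card_eq_fintype_card,
    ← Projectivization.card_of_finrank_two K V hV]
  exact Nat.card_congr (Projectivization.equivSubmodule K V).symm

theorem card_le_card_add_one_of_finrank_eq_one (hV : finrank K V = 2)
    (hD : ∀ H ∈ D, finrank K H = 1) : #D ≤ Fintype.card K + 1 := by
  have hcard := ncard_setOf_finrank_eq_one hV
  rw [← hcard, ← Set.ncard_coe_finset]
  exact Set.ncard_le_ncard hD (Set.finite_of_ncard_pos (by omega))

theorem exists_notMem_of_card_lt_two_mul_card (hV : finrank K V = 2)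
    (hq : 3 ≤ Fintype.card K) (hD : ∀ H ∈ D, finrank K H = 1) {A : Finset V}
    (hA : #A < 2 * #D) : ∃ a, a ∉ A := by
  have : FiniteDimensional K V := .of_finrank_pos (by omega)
  have : Finite V := Module.finite_of_finite K
  have := Fintype.ofFinite V
  by_contra! hall
  have hDq := card_le_card_add_one_of_finrank_eq_one hV hD
  rw [eq_univ_of_forall hall, card_univ, Module.card_eq_pow_finrank (K := K), hV] at hA
  nlinarith

theorem exists_finrank_eq_one_notMem (hV : finrank K V = 2) (hD : #D ≤ Fintype.card K) :
    ∃ H : Submodule K V, finrank K H = 1 ∧ H ∉ D := by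
  refine Set.exists_mem_notMem_of_ncard_lt_ncard (s := (D : Set (Submodule K V)))
    (t := {H | finrank K H = 1}) ?_
  rw [ncard_setOf_finrank_eq_one hV, Set.ncard_coe_finset]
  omega

theorem card_le_card_filter_ker_sub_smul_mem (hV : finrank K V = 2)
    (hD : ∀ H ∈ D, finrank K H = 1) {A B : Dual K V} (hAB : ∀ m : K, A - m • B ≠ 0)
    (hDB : ∀ H ∈ D, ¬ H ≤ LinearMap.ker B) :
    #D ≤ #{m : K | LinearMap.ker (A - m • B) ∈ D} := by
  have : FiniteDimensional K V := .of_finrank_pos (by omega)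
  have hslope (H) (hH : H ∈ D) : ∃ m : K, LinearMap.ker (A - m • B) = H := by
    obtain ⟨v, hvH, hBv⟩ := SetLike.not_le_iff_exists.1 (hDB H hH)
    have hker := Dual.finrank_ker_add_one_of_ne_zero (hAB (A v / B v))
    refine ⟨A v / B v, eq_of_mem_of_finrank_eq_one (by omega) (hD H hH) (v := v) ?_ ?_ hvH⟩
    · exact fun hv => hBv (hv ▸ Submodule.zero_mem _)
    · simp [div_mul_cancel₀ _ hBv]
  refine card_le_card_of_surjOn (fun m => LinearMap.ker (A - m • B)) fun H hH => ?_
  obtain ⟨m, rfl⟩ := hslope H hH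
  exact ⟨m, mem_coe.2 (mem_filter.2 ⟨mem_univ m, hH⟩), rfl⟩

/-- The point set `T` determines none of the directions in `D`: no line in such a direction
contains two points of `T`. -/
def AvoidsDirections (T : Finset V) (D : Finset (Submodule K V)) : Prop :=
  ∀ H ∈ D, ∀ x ∈ T, ∀ y ∈ T, x - y ∈ H → x = y

namespace AvoidsDirections

variable {T : Finset V}

theorem injOn_or_forall_eq (p : ℕ) [CharP K p] (hT : AvoidsDirections T D)
    (hV : finrank K V = 2) (hD : ∀ H ∈ D, finrank K H = 1) (hT2 : 2 ≤ #T)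
    (hDp : Fintype.card K < #D + p) (hcard : 2 * Fintype.card K ≤ #T + 2 * #D) {A B : Dual K V}
    (hAB : ∀ m : K, A - m • B ≠ 0) (hDB : ∀ H ∈ D, ¬ H ≤ LinearMap.ker B) :
    Set.InjOn A T ∨ ∀ y ∈ T, ∀ z ∈ T, A y = A z := by
  set P : Finset K := {m | LinearMap.ker (A - m • B) ∈ D}
  have hDP : #D ≤ #P := card_le_card_filter_ker_sub_smul_mem hV hD hAB hDB
  have hinj : ∀ m ∈ P, Set.InjOn (fun u => A u - B u * m) T := by
    intro m hm u hu v hv huv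
    refine hT _ (mem_filter.1 hm).2 u hu v hv ?_
    simp only [LinearMap.mem_ker, LinearMap.sub_apply, LinearMap.smul_apply, map_sub, smul_eq_mul]
    linear_combination huv
  exact injOn_or_forall_eq_of_injOn_sub_mul p hT2 hinj (by omega) (by omega)

theorem sub_mem_span (p : ℕ) [CharP K p] (hT : AvoidsDirections T D) (hV : finrank K V = 2)
    (hD : ∀ H ∈ D, finrank K H = 1) (hDp : Fintype.card K < #D + p)
    (hcard : 2 * Fintype.card K ≤ #T + 2 * #D) {x y z : V} (hx : x ∈ T) (hy : y ∈ T)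
    (hz : z ∈ T) (hxy : x ≠ y) : z - y ∈ K ∙ (x - y) := by
  by_contra hzxy
  have hzy : z - y ≠ 0 := fun h => hzxy (h ▸ Submodule.zero_mem _)
  have : FiniteDimensional K V := .of_finrank_pos (by omega)
  have hfun {v : V} (hv : v ≠ 0) : ∃ f : Dual K V, LinearMap.ker f = K ∙ v :=
    exists_dual_ker_eq (by rw [finrank_span_singleton hv, hV])
  obtain ⟨A, hA⟩ := hfun (sub_ne_zero.2 hxy)
  obtain ⟨B, hB⟩ := hfun hzy
  have hAx : A x = A y := by
    rw [← sub_eq_zero, ← map_sub, ← LinearMap.mem_ker, hA]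
    exact Submodule.mem_span_singleton_self _
  have hAz : A z ≠ A y := by
    rwa [Ne, ← sub_eq_zero, ← map_sub, ← LinearMap.mem_ker, hA]
  have hBz : B (z - y) = 0 := by
    rw [← LinearMap.mem_ker, hB]
    exact Submodule.mem_span_singleton_self _
  have hAB (m : K) : A - m • B ≠ 0 := by
    intro h
    have := LinearMap.congr_fun h (z - y)
    simp [hBz, sub_eq_zero, hAz] at this
  have hDB (H) (hH : H ∈ D) : ¬ H ≤ LinearMap.ker B := by
    intro hle
    have hHB : H = LinearMap.ker B :=
      Submodule.eq_of_le_of_finrank_eq hle (by rw [hD H hH, hB, finrank_span_singleton hzy])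
    exact hzy (sub_eq_zero.2 (hT H hH z hz y hy (hHB ▸ hBz)))
  have hT2 : 2 ≤ #T := one_lt_card.2 ⟨x, hx, y, hy, hxy⟩
  rcases hT.injOn_or_forall_eq p hV hD hT2 hDp hcard hAB hDB with h | h
  · exact hxy (h hx hy hAx)
  · exact hAz (h z hz y hy)

theorem exists_direction_notMem (p : ℕ) [CharP K p] (hT : AvoidsDirections T D)
    (hV : finrank K V = 2) (hD : ∀ H ∈ D, finrank K H = 1) (hDp : Fintype.card K < #D + p)
    (hDq : #D ≤ Fintype.card K) (hcard : 2 * Fintype.card K ≤ #T + 2 * #D) :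
    ∃ H : Submodule K V, finrank K H = 1 ∧ H ∉ D ∧ ∀ x ∈ T, ∀ y ∈ T, y - x ∈ H := by
  by_cases hT1 : #T ≤ 1
  · obtain ⟨H, hH, hHD⟩ := exists_finrank_eq_one_notMem hV hDq
    refine ⟨H, hH, hHD, fun x hx y hy => ?_⟩
    rw [card_le_one.1 hT1 y hy x hx, sub_self]
    exact H.zero_mem
  · obtain ⟨x, hx, y, hy, hxy⟩ := one_lt_card.1 (not_le.1 hT1)
    have hmem {z : V} (hz : z ∈ T) : z - y ∈ K ∙ (x - y) :=
      hT.sub_mem_span p hV hD hDp hcard hx hy hz hxy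
    refine ⟨K ∙ (x - y), finrank_span_singleton (sub_ne_zero.2 hxy), fun hmemD => hxy ?_,
      fun u hu v hv => ?_⟩
    · exact hT _ hmemD x hx y hy (hmem hx)
    · rw [← sub_sub_sub_cancel_right v u y]
      exact Submodule.sub_mem _ (hmem hv) (hmem hu)

end AvoidsDirections

end Directions

end Lines

section Weights

open Finset Module

theorem card_filter_neg_add_card_filter_pos {ι R : Type*} [Fintype ι] [Zero R] [LinearOrder R]
    (w : ι → R) : #{z | w z < 0} + #{z | 0 < w z} = #{z | w z ≠ 0} := by
  rw [← card_union_of_disjoint (disjoint_filter.2 fun z _ hneg hpos => hneg.asymm hpos),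
    ← filter_or]
  simp only [ne_iff_lt_or_gt]

variable {K V R : Type*} [Field K] [AddCommGroup V] [Module K V] [Fintype V] [AddCommGroup R]

/-- `D` is a set of directions in which every line has `w`-sum `c`. For a nonempty `D` these are
perfect directions, with `c` the average of `w` multiplied by the number of points of a line. -/
structure HasLineSums (w : V → R) (D : Finset (Submodule K V)) (c : R) : Prop where
  finrank_eq_one : ∀ H ∈ D, finrank K H = 1
  sum_eq : ∀ H ∈ D, ∀ a, ∑ z ∈ lineThrough H a, w z = c

namespace HasLineSums

variable {w : V → R} {D : Finset (Submodule K V)} {H : Submodule K V} {c : R}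

theorem neg (h : HasLineSums w D c) : HasLineSums (-w) D (-c) where
  finrank_eq_one := h.finrank_eq_one
  sum_eq H hH a := by simp only [Pi.neg_apply, sum_neg_distrib, h.sum_eq H hH a]

theorem sum_eq_card_nsmul [Fintype K] [IsAddTorsionFree R] (h : HasLineSums w D c)
    (hV : finrank K V = 2) (hD : D.Nonempty) : ∑ z, w z = Fintype.card K • c := by
  obtain ⟨H, hH⟩ := hD
  have hsum := sum_sum_lineThrough (h.finrank_eq_one H hH) w
  simp only [h.sum_eq H hH, sum_const, card_univ, Module.card_eq_pow_finrank (K := K) (V := V), hV,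
    sq, mul_nsmul'] at hsum
  exact (nsmul_right_injective Fintype.card_ne_zero hsum).symm

theorem exists_ne_mem_lineThrough (h : HasLineSums w D c) (hH : H ∈ D) {u : V} (huc : w u ≠ c) :
    ∃ z ∈ lineThrough H u, z ≠ u ∧ w z ≠ 0 := by
  by_contra! hzero
  exact huc ((sum_eq_single_of_mem u (self_mem_lineThrough H u) hzero).symm.trans (h.sum_eq H hH u))

theorem two_le_card_add_card [DecidableEq R] (h : HasLineSums w D c) (hc : c ≠ 0) (hH : H ∈ D)
    (a : V) :
    2 ≤ #{z ∈ lineThrough H a | w z ≠ 0} + #{z ∈ lineThrough H a | w z = c} := by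
  obtain ⟨z, hz, hz0⟩ := exists_ne_zero_of_sum_ne_zero ((h.sum_eq H hH a).trans_ne hc)
  have hzS : z ∈ {z ∈ lineThrough H a | w z ≠ 0} := mem_filter.2 ⟨hz, hz0⟩
  by_cases hzc : w z = c
  · have hS := card_pos.2 ⟨z, hzS⟩
    have hT : 0 < #{z ∈ lineThrough H a | w z = c} := card_pos.2 ⟨z, mem_filter.2 ⟨hz, hzc⟩⟩
    omega
  · obtain ⟨y, hy, hyz, hy0⟩ := h.exists_ne_mem_lineThrough hH hzc
    rw [lineThrough_eq_of_mem hz] at hy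
    have hS := one_lt_card.2 ⟨y, mem_filter.2 ⟨hy, hy0⟩, z, hzS, hyz⟩
    omega

theorem two_mul_card_le [DecidableEq R] [Fintype K] (h : HasLineSums w D c) (hV : finrank K V = 2)
    (hc : c ≠ 0) (hD : D.Nonempty) :
    2 * Fintype.card K ≤ #{z | w z ≠ 0} + #{z | w z = c} := by
  obtain ⟨H, hH⟩ := hD
  have hcount (P : V → Prop) [DecidablePred P] :
      ∑ a, #{z ∈ lineThrough H a | P z} = Fintype.card K * #{z | P z} := by
    simp only [card_filter, sum_sum_lineThrough (h.finrank_eq_one H hH), smul_eq_mul]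
  have hsum : Fintype.card V * 2 ≤
      Fintype.card K * #{z | w z ≠ 0} + Fintype.card K * #{z | w z = c} := by
    rw [← hcount, ← hcount, ← sum_add_distrib, ← card_univ, ← smul_eq_mul]
    exact card_nsmul_le_sum _ _ _ fun a _ => h.two_le_card_add_card hc hH a
  rw [Module.card_eq_pow_finrank (K := K), hV, ← mul_add, sq, mul_assoc, mul_comm _ 2] at hsum
  exact Nat.le_of_mul_le_mul_left hsum Fintype.card_pos

theorem exists_notMem_lineThrough (h : HasLineSums w D c) (hD : D.Nonempty)
    {H₀ : Submodule K V} (hH₀ : finrank K H₀ = 1) (hH₀D : H₀ ∉ D) {u : V} (hu0 : w u ≠ 0)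
    (huc : w u ≠ c) (x : V) : ∃ v, w v ≠ 0 ∧ v ∉ lineThrough H₀ x := by
  by_contra! hline
  obtain ⟨H, hH⟩ := hD
  obtain ⟨z, hz, hzu, hz0⟩ := h.exists_ne_mem_lineThrough hH huc
  have hmem : z - u ∈ H₀ := by
    rw [← mem_lineThrough, lineThrough_eq_of_mem (hline u hu0)]
    exact hline z hz0
  exact hH₀D (eq_of_mem_of_finrank_eq_one hH₀ (h.finrank_eq_one H hH) (sub_ne_zero.2 hzu) hmem
    (mem_lineThrough.1 hz) ▸ hH)

variable [LinearOrder R] [IsOrderedAddMonoid R]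

theorem exists_neg_of_lt (h : HasLineSums w D c) (hH : H ∈ D) {u : V} (hu : c < w u) :
    ∃ z ∈ lineThrough H u, w z < 0 := by
  by_contra! hnn
  have hle := single_le_sum hnn (self_mem_lineThrough H u)
  rw [h.sum_eq H hH] at hle
  exact hu.not_ge hle

theorem exists_pos_of_neg (h : HasLineSums w D c) (hc : 0 ≤ c) (hH : H ∈ D) {n : V}
    (hn : w n < 0) : ∃ z ∈ lineThrough H n, 0 < w z := by
  by_contra! hnp
  have hlt := sum_neg' hnp ⟨n, self_mem_lineThrough H n, hn⟩
  rw [h.sum_eq H hH] at hlt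
  exact hlt.not_ge hc

theorem le_of_card_lt (h : HasLineSums w D c) (hc : 0 ≤ c) (hcard : #{z | w z ≠ 0} < 2 * #D)
    (u : V) : w u ≤ c := by
  by_contra! hu
  have hneg : 1 * #D ≤ #{z | w z < 0} := by
    refine mul_card_le_card_filter_of_lineThrough h.finrank_eq_one (hc.trans_lt hu).not_gt
      fun H hH => ?_
    rw [one_le_card, filter_nonempty_iff]
    exact h.exists_neg_of_lt hH hu
  have hD : 0 < #D := by omega
  obtain ⟨n, hn⟩ : ∃ n, w n < 0 := by
    obtain ⟨H, hH⟩ := card_pos.1 hD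
    obtain ⟨n, -, hn⟩ := h.exists_neg_of_lt hH hu
    exact ⟨n, hn⟩
  have hpos : 1 * #D ≤ #{z | 0 < w z} := by
    refine mul_card_le_card_filter_of_lineThrough h.finrank_eq_one hn.not_gt fun H hH => ?_
    rw [one_le_card, filter_nonempty_iff]
    exact h.exists_pos_of_neg hc hH hn
  have := card_filter_neg_add_card_filter_pos w
  omega

theorem two_le_card_filter_pos (h : HasLineSums w D c) (hc : 0 ≤ c) (hle : ∀ z, w z ≤ c)
    (hH : H ∈ D) {n : V} (hn : w n < 0) : 2 ≤ #{z ∈ lineThrough H n | 0 < w z} := by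
  by_contra! hlt
  have hpos : ∑ z ∈ lineThrough H n with 0 < w z, w z ≤ c := by
    calc ∑ z ∈ lineThrough H n with 0 < w z, w z ≤ #{z ∈ lineThrough H n | 0 < w z} • c :=
          sum_le_card_nsmul _ _ _ fun z _ => hle z
      _ ≤ 1 • c := nsmul_le_nsmul_left hc (by omega)
      _ = c := one_nsmul c
  have hneg : ∑ z ∈ lineThrough H n with ¬ 0 < w z, w z < 0 :=
    sum_neg' (fun z hz => not_lt.1 (mem_filter.1 hz).2)
      ⟨n, mem_filter.2 ⟨self_mem_lineThrough H n, hn.not_gt⟩, hn⟩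
  have hsum := sum_filter_add_sum_filter_not (lineThrough H n) (fun z => 0 < w z) w
  rw [h.sum_eq H hH] at hsum
  exact (add_lt_of_le_of_neg hpos hneg).ne hsum

theorem nonneg_of_card_lt (h : HasLineSums w D c) (hc : 0 ≤ c)
    (hcard : #{z | w z ≠ 0} < 2 * #D) (n : V) : 0 ≤ w n := by
  by_contra! hn
  have hle := h.le_of_card_lt hc hcard
  have hpos : 2 * #D ≤ #{z | 0 < w z} :=
    mul_card_le_card_filter_of_lineThrough h.finrank_eq_one hn.not_gt fun H hH =>
      h.two_le_card_filter_pos hc hle hH hn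
  have := card_filter_neg_add_card_filter_pos w
  omega

theorem eq_zero_of_mem_lineThrough (h : HasLineSums w D c) (hw : ∀ z, 0 ≤ w z) (hH : H ∈ D)
    {x z : V} (hx : w x = c) (hz : z ∈ lineThrough H x) (hzx : z ≠ x) : w z = 0 := by
  by_contra hz0
  have hlt := single_lt_sum hzx (self_mem_lineThrough H x) hz ((hw z).lt_of_ne' hz0)
    fun y _ _ => hw y
  rw [h.sum_eq H hH, hx] at hlt
  exact hlt.false

theorem avoidsDirections (h : HasLineSums w D c) (hw : ∀ z, 0 ≤ w z) (hc : c ≠ 0) :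
    AvoidsDirections {z | w z = c} D := by
  intro H hH y hy z hz hyz
  rw [mem_filter_univ] at hy hz
  by_contra hne
  exact hc (hy ▸ h.eq_zero_of_mem_lineThrough hw hH hz (mem_lineThrough.2 hyz) hne)

variable [Fintype K]

theorem card_le_of_eq_zero (h : HasLineSums w D c) (hV : finrank K V = 2) (hw : ∀ z, 0 ≤ w z)
    (hc : 0 < c) {a : V} (ha : w a = 0) : #D ≤ Fintype.card K := by
  rcases D.eq_empty_or_nonempty with rfl | hD
  · simp
  have hdisj := pairwiseDisjoint_lineThrough_erase h.finrank_eq_one a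
  refine (nsmul_le_nsmul_iff_left hc).1 ?_
  calc #D • c = ∑ H ∈ D, ∑ z ∈ (lineThrough H a).erase a, w z := by
        rw [← sum_const]
        refine sum_congr rfl fun H hH => ?_
        rw [sum_erase _ ha, h.sum_eq H hH]
    _ = ∑ z ∈ D.biUnion fun H => (lineThrough H a).erase a, w z := (sum_biUnion hdisj).symm
    _ ≤ ∑ z, w z := sum_le_sum_of_subset_of_nonneg (subset_univ _) fun z _ _ => hw z
    _ = Fintype.card K • c := h.sum_eq_card_nsmul hV hD

theorem exists_direction_notMem (p : ℕ) [CharP K p] (h : HasLineSums w D c)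
    (hV : finrank K V = 2) (hw : ∀ z, 0 ≤ w z) (hc : 0 < c) (hDp : Fintype.card K < #D + p)
    (hDq : #D ≤ Fintype.card K) (hcard : #{z | w z ≠ 0} < 2 * #D) :
    ∃ (x : V) (H₀ : Submodule K V), finrank K H₀ = 1 ∧ H₀ ∉ D ∧
      ∀ z, w z = c → z ∈ lineThrough H₀ x := by
  have hST := h.two_mul_card_le hV hc.ne' (card_pos.1 (by omega))
  obtain ⟨H₀, hH₀, hH₀D, hline⟩ := (h.avoidsDirections hw hc.ne').exists_direction_notMem p hV
    h.finrank_eq_one hDp hDq (by omega)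
  obtain ⟨x, hx⟩ : (univ.filter (w · = c)).Nonempty := card_pos.1 (by omega)
  exact ⟨x, H₀, hH₀, hH₀D, fun z hz => mem_lineThrough.2 (hline x hx z (by simpa using hz))⟩

theorem card_add_card_le (h : HasLineSums w D c) (hV : finrank K V = 2) (hw : ∀ z, 0 ≤ w z)
    {H₀ : Submodule K V} (hH₀ : finrank K H₀ = 1) (hH₀D : H₀ ∉ D) {x v : V}
    (hx : ∀ z, w z = c → z ∈ lineThrough H₀ x) (hv0 : w v ≠ 0) (hv : v ∉ lineThrough H₀ x) :
    #D + #{z | w z = c} ≤ Fintype.card K := by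
  have hD : 1 * #D ≤ #{z | z ∈ lineThrough H₀ x ∧ w z ≠ c} := by
    refine mul_card_le_card_filter_of_lineThrough h.finrank_eq_one (a := v) (fun hvx => hv hvx.1)
      fun H hH => ?_
    obtain ⟨z, hz⟩ := lineThrough_inter_nonempty hV (h.finrank_eq_one H hH) hH₀
      (fun hHH₀ => hH₀D (hHH₀ ▸ hH)) v x
    obtain ⟨hzH, hzH₀⟩ := mem_inter.1 hz
    rw [one_le_card, filter_nonempty_iff]
    refine ⟨z, hzH, hzH₀, fun hzc => hv0 ?_⟩
    exact h.eq_zero_of_mem_lineThrough hw hH hzc (mem_lineThrough_comm.1 hzH)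
      fun hvz => hv (hvz ▸ hzH₀)
  have hS : univ.filter (fun z => z ∈ lineThrough H₀ x ∧ w z ≠ c) =
      {z ∈ lineThrough H₀ x | ¬ w z = c} := by
    ext z
    simp
  have hT : univ.filter (w · = c) = {z ∈ lineThrough H₀ x | w z = c} := by
    ext z
    simpa using hx z
  rw [one_mul, hS] at hD
  have hline := card_filter_add_card_filter_not (s := lineThrough H₀ x) (w · = c)
  rw [card_lineThrough hH₀] at hline
  rw [hT]
  omega

theorem exists_eq_indicator_of_nonneg (p : ℕ) [CharP K p] (h : HasLineSums w D c)
    (hV : finrank K V = 2) (hq : 3 ≤ Fintype.card K) (hc : 0 ≤ c) (hw0 : w ≠ 0)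
    (hDp : Fintype.card K < #D + p) (hcard : #{z | w z ≠ 0} < 2 * #D) :
    ∃ (a : V) (H : Submodule K V), finrank K H = 1 ∧
      w = Set.indicator (lineThrough H a) fun _ => c := by
  have hw := h.nonneg_of_card_lt hc hcard
  obtain ⟨u, hu⟩ := Function.ne_iff.1 hw0
  have hcpos : 0 < c := ((hw u).lt_of_ne' hu).trans_le (h.le_of_card_lt hc hcard u)
  obtain ⟨a, ha⟩ := exists_notMem_of_card_lt_two_mul_card hV hq h.finrank_eq_one hcard
  have hDq := h.card_le_of_eq_zero hV hw hcpos (a := a) (by simpa using ha)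
  have hD : D.Nonempty := card_pos.1 (by omega)
  obtain ⟨x, H₀, hH₀, hH₀D, hx⟩ := h.exists_direction_notMem p hV hw hcpos hDp hDq hcard
  have hST := h.two_mul_card_le hV hcpos.ne' hD
  have hSc {z : V} (hz : w z ≠ 0) : w z = c := by
    by_contra hzc
    obtain ⟨v, hv0, hv⟩ := h.exists_notMem_lineThrough hD hH₀ hH₀D hz hzc x
    have := h.card_add_card_le hV hw hH₀ hH₀D hx hv0 hv
    omega
  have hS : univ.filter (w · ≠ 0) = univ.filter (w · = c) :=
    filter_congr fun z _ => ⟨hSc, fun hz => hz.trans_ne hcpos.ne'⟩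
  have hT : univ.filter (w · = c) = lineThrough H₀ x := by
    refine eq_of_subset_of_card_le (fun z hz => hx z (by simpa using hz)) ?_
    rw [card_lineThrough hH₀]
    rw [hS] at hST
    omega
  refine ⟨x, H₀, hH₀, ?_⟩
  rw [← hT]
  ext z
  simp only [Set.indicator_apply, mem_coe, mem_filter_univ]
  split_ifs with hz
  exacts [hz, not_imp_comm.1 hSc hz]

theorem exists_eq_indicator (p : ℕ) [CharP K p] (h : HasLineSums w D c)
    (hV : finrank K V = 2) (hq : 3 ≤ Fintype.card K) (hw0 : w ≠ 0)
    (hDp : Fintype.card K < #D + p) (hcard : #{z | w z ≠ 0} < 2 * #D) :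
    ∃ (a : V) (H : Submodule K V), finrank K H = 1 ∧
      w = Set.indicator (lineThrough H a) fun _ => c := by
  rcases le_total 0 c with hc | hc
  · exact h.exists_eq_indicator_of_nonneg p hV hq hc hw0 hDp hcard
  · obtain ⟨a, H, hH, hw⟩ := h.neg.exists_eq_indicator_of_nonneg p hV hq (neg_nonneg.2 hc)
      (neg_ne_zero.2 hw0) hDp (by simpa using hcard)
    exact ⟨a, H, hH, by rw [← neg_inj, hw, ← Set.indicator_neg']; rfl⟩

end HasLineSums

/-- The direction `H` is perfect: every line in this direction has `w`-sum equal to `1 / |K|` times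
the total `w`-sum. The division is cleared, so that the weights may lie in any additive group. -/
def IsPerfectDirection [Fintype K] (w : V → R) (H : Submodule K V) : Prop :=
  finrank K H = 1 ∧ ∀ a, Fintype.card K • ∑ z ∈ lineThrough H a, w z = ∑ z, w z

theorem exists_hasLineSums [Fintype K] [IsAddTorsionFree R] {w : V → R}
    {D : Finset (Submodule K V)} (hD : ∀ H ∈ D, IsPerfectDirection w H) :
    ∃ c, HasLineSums w D c := by
  rcases D.eq_empty_or_nonempty with rfl | ⟨H₁, hH₁⟩
  · exact ⟨0, by simp, by simp⟩
  · refine ⟨∑ z ∈ lineThrough H₁ 0, w z, fun H hH => (hD H hH).1, fun H hH a => ?_⟩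
    exact nsmul_right_injective Fintype.card_ne_zero
      (((hD H hH).2 a).trans ((hD H₁ hH₁).2 0).symm)

end Weights

open Finset Module in
theorem stmt2_general {K V R : Type*} [Field K] [Fintype K] (p : ℕ) [CharP K p]
    (hq : 3 ≤ Fintype.card K) [AddCommGroup V] [Module K V] [Fintype V] (hV : finrank K V = 2)
    [AddCommGroup R] [LinearOrder R] [IsOrderedAddMonoid R] {w : V → R}
    (hw : (Function.support w).Nonempty)
    (hnot : ¬ ((∃ (a : V) (H : Submodule K V), finrank K H = 1 ∧
      Function.support w = (a + ·) '' (H : Set V)) ∧ ∃ c, ∀ z ∈ Function.support w, w z = c)) :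
    2 * Nat.card {H : Submodule K V // IsPerfectDirection w H} ≤
      max (Function.support w).ncard (2 * (Fintype.card K - p)) := by
  have := Fintype.ofFinite (Submodule K V)
  set D : Finset (Submodule K V) := {H | IsPerfectDirection w H}
  have hD : Nat.card {H : Submodule K V // IsPerfectDirection w H} = #D :=
    Nat.subtype_card D (by simp [D])
  have hS : (Function.support w).ncard = #{z | w z ≠ 0} := by
    rw [← Set.ncard_coe_finset, coe_filter_univ]
    rfl
  by_contra! hlt
  rw [max_lt_iff, hD, hS] at hlt
  obtain ⟨c, h⟩ := exists_hasLineSums (D := D) (w := w) (by simp [D])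
  obtain ⟨a, H, hH, hwc⟩ := h.exists_eq_indicator p hV hq (Function.support_nonempty_iff.1 hw)
    (by omega) hlt.1
  have hc : c ≠ 0 := by
    rintro rfl
    simp [hwc] at hw
  refine hnot ⟨⟨a, H, hH, ?_⟩, c, fun z hz => ?_⟩
  · rw [← coe_lineThrough, hwc, Set.support_indicator, Function.support_const hc, Set.inter_univ]
  · rw [hwc] at hz ⊢
    exact Set.indicator_of_mem (Set.mem_of_indicator_ne_zero hz) _

theorem isPerfectDirection_iff {p : ℕ} [Fact p.Prime] {w : ZMod p × ZMod p → ℝ}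
    {H : Submodule (ZMod p) (ZMod p × ZMod p)} :
    IsPerfectDirection w H ↔ Module.finrank (ZMod p) H = 1 ∧ IsPerfect p w H := by
  have hp : (p : ℝ) ≠ 0 := Nat.cast_ne_zero.2 (NeZero.ne p)
  simp only [IsPerfectDirection, IsPerfect, sum_lineThrough, eq_div_iff hp, ZMod.card,
    nsmul_eq_mul, mul_comm (p : ℝ)]

theorem stmt2 (p : ℕ) (hp : p.Prime) (hp3 : 3 ≤ p) [NeZero p]
    (S : Set (ZMod p × ZMod p)) (hS : S.Nonempty)
    (w : ZMod p × ZMod p → ℝ) (hsupp : Function.support w = S)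
    (hnot : ¬ (IsLine p S ∧ ∃ c : ℝ, ∀ z ∈ S, w z = c)) :
    2 * Nat.card {H : Submodule (ZMod p) (ZMod p × ZMod p) //
        Module.finrank (ZMod p) H = 1 ∧ IsPerfect p w H} ≤ S.ncard := by
  have := Fact.mk hp
  subst hsupp
  simpa [isPerfectDirection_iff] using
    stmt2_general (K := ZMod p) p (by simpa using hp3) (by simp) hS hnot
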